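/- arXiv:math/0512053 — 3 statements merged into one kernel-verified Lean document; each statement's English description precedes it below -/
import Mathlib

section
/- (i) For every λ > 0 there exist V > 0, Ω > 0 and m ∈ (−∞, −1) such that g(t) := V·sn(Ωt, m) is odd, 2π-periodic with minimal period 2π, and satisfies g'' − ⟨g²⟩ g + λ g³ = 0 on ℝ. (ii) For every λ ∈ (0, 1) there exist V > 0, Ω > 0 and m ∈ (0, 1) such that g(t) := V·sn(Ωt, m) is odd, 2π-periodic with minimal period 2π, and satisfies g'' + ⟨g²⟩ g − λ g³ = 0 on ℝ. -/
open Real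

/-- Average of a function over one period `[0, 2π]`. -/
noncomputable def avg (f : ℝ → ℝ) : ℝ := (1 / (2 * π)) * ∫ t in (0:ℝ)..(2 * π), f t

/-- Incomplete elliptic integral of the first kind `F(φ, m)`. -/
noncomputable def Fm (m φ : ℝ) : ℝ := ∫ θ in (0:ℝ)..φ, 1 / Real.sqrt (1 - m * Real.sin θ ^ 2)

/-- The Jacobi elliptic sine `sn(t, m) = sin(F_m⁻¹(t))`. -/
noncomputable def sn (t m : ℝ) : ℝ := Real.sin (Function.invFun (Fm m) t)

lemma one_sub_mul_sin_sq_pos {m : ℝ} (hm : m < 1) (θ : ℝ) : 0 < 1 - m * sin θ ^ 2 := by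
  rcases le_total m 0 with h | h
  · nlinarith [sq_nonneg (sin θ)]
  · nlinarith [sin_sq_le_one θ]

lemma continuous_one_div_sqrt {m : ℝ} (hm : m < 1) :
    Continuous fun θ => 1 / √(1 - m * sin θ ^ 2) :=
  continuous_const.div (by fun_prop)
    fun θ => (sqrt_pos.2 (one_sub_mul_sin_sq_pos hm θ)).ne'

lemma hasDerivAt_Fm {m : ℝ} (hm : m < 1) (φ : ℝ) :
    HasDerivAt (Fm m) (1 / √(1 - m * sin φ ^ 2)) φ :=
  intervalIntegral.integral_hasDerivAt_right
    ((continuous_one_div_sqrt hm).intervalIntegrable _ _)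
    ((continuous_one_div_sqrt hm).stronglyMeasurableAtFilter _ _)
    (continuous_one_div_sqrt hm).continuousAt

lemma continuous_Fm {m : ℝ} (hm : m < 1) : Continuous (Fm m) :=
  continuous_iff_continuousAt.2 fun φ => (hasDerivAt_Fm hm φ).continuousAt

lemma strictMono_Fm {m : ℝ} (hm : m < 1) : StrictMono (Fm m) :=
  strictMono_of_deriv_pos fun φ => by
    rw [(hasDerivAt_Fm hm φ).deriv]
    exact one_div_pos.2 (sqrt_pos.2 (one_sub_mul_sin_sq_pos hm φ))

lemma Fm_zero (m : ℝ) : Fm m 0 = 0 := intervalIntegral.integral_same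

lemma Fm_neg (m φ : ℝ) : Fm m (-φ) = -Fm m φ := by
  have h := intervalIntegral.integral_comp_neg (a := 0) (b := φ)
    (fun θ => 1 / √(1 - m * sin θ ^ 2))
  simp only [sin_neg, neg_sq, neg_zero] at h
  rw [Fm, Fm, intervalIntegral.integral_symm, h]

lemma Fm_add_two_pi {m : ℝ} (hm : m < 1) (φ : ℝ) :
    Fm m (φ + 2 * π) = Fm m φ + Fm m (2 * π) := by
  have hper : Function.Periodic (fun θ => 1 / √(1 - m * sin θ ^ 2)) (2 * π) :=
    fun θ => by simp only [sin_add_two_pi]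
  have hint := fun a b => (continuous_one_div_sqrt hm).intervalIntegrable
    (μ := MeasureTheory.volume) a b
  have h := hper.intervalIntegral_add_eq φ 0
  rw [zero_add] at h
  rw [Fm, Fm, Fm, ← h, intervalIntegral.integral_add_adjacent_intervals (hint _ _) (hint _ _)]

lemma Fm_two_pi_pos {m : ℝ} (hm : m < 1) : 0 < Fm m (2 * π) := by
  simpa [Fm_zero] using strictMono_Fm hm two_pi_pos

lemma surjective_Fm {m : ℝ} (hm : m < 1) : Function.Surjective (Fm m) := by
  have hnat (n : ℕ) : Fm m (n * (2 * π)) = n * Fm m (2 * π) := by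
    induction n with
    | zero => simp [Fm_zero]
    | succ k ih =>
      push_cast
      rw [add_mul, one_mul, Fm_add_two_pi hm, ih]
      ring
  have htop : Filter.Tendsto (Fm m) Filter.atTop Filter.atTop := by
    refine Filter.tendsto_atTop_atTop_of_monotone (strictMono_Fm hm).monotone fun b => ?_
    obtain ⟨n, hn⟩ := exists_nat_ge (b / Fm m (2 * π))
    exact ⟨n * (2 * π), by rw [hnat]; exact (div_le_iff₀ (Fm_two_pi_pos hm)).1 hn⟩
  have hbot : Filter.Tendsto (Fm m) Filter.atBot Filter.atBot := by
    have h := Filter.tendsto_neg_atTop_atBot.comp (htop.comp Filter.tendsto_neg_atBot_atTop)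
    refine h.congr fun x => ?_
    simp [Fm_neg]
  exact (continuous_Fm hm).surjective htop hbot

/-- The Jacobi amplitude, the inverse of `Fm m`. -/
noncomputable def amplitude (m t : ℝ) : ℝ := Function.invFun (Fm m) t

lemma amplitude_Fm {m : ℝ} (hm : m < 1) (φ : ℝ) : amplitude m (Fm m φ) = φ :=
  Function.leftInverse_invFun (strictMono_Fm hm).injective φ

lemma Fm_amplitude {m : ℝ} (hm : m < 1) (t : ℝ) : Fm m (amplitude m t) = t :=
  Function.rightInverse_invFun (surjective_Fm hm) t

lemma sn_Fm {m : ℝ} (hm : m < 1) (φ : ℝ) : sn (Fm m φ) m = sin φ :=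
  congrArg sin (amplitude_Fm hm φ)

lemma continuous_amplitude {m : ℝ} (hm : m < 1) : Continuous (amplitude m) := by
  have h : amplitude m = ((strictMono_Fm hm).orderIsoOfSurjective _ (surjective_Fm hm)).symm := by
    funext t
    rw [OrderIso.eq_symm_apply]
    exact Fm_amplitude hm t
  rw [h]
  exact OrderIso.continuous _

lemma hasDerivAt_amplitude {m : ℝ} (hm : m < 1) (t : ℝ) :
    HasDerivAt (amplitude m) √(1 - m * sin (amplitude m t) ^ 2) t := by
  have hpos := sqrt_pos.2 (one_sub_mul_sin_sq_pos hm (amplitude m t))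
  have h := (hasDerivAt_Fm hm (amplitude m t)).of_local_left_inverse
    (continuous_amplitude hm).continuousAt (one_div_pos.2 hpos).ne'
    (Filter.Eventually.of_forall (Fm_amplitude hm))
  simpa using h

lemma hasDerivAt_sn {m : ℝ} (hm : m < 1) (t : ℝ) :
    HasDerivAt (fun t => sn t m)
      (cos (amplitude m t) * √(1 - m * sin (amplitude m t) ^ 2)) t :=
  (hasDerivAt_amplitude hm t).sin

lemma hasDerivAt_deriv_sn {m : ℝ} (hm : m < 1) (t : ℝ) :
    HasDerivAt (fun t => cos (amplitude m t) * √(1 - m * sin (amplitude m t) ^ 2))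
      (-(1 + m) * sn t m + 2 * m * sn t m ^ 3) t := by
  have hA := hasDerivAt_amplitude hm t
  have hp := one_sub_mul_sin_sq_pos hm (amplitude m t)
  have hs := sqrt_pos.2 hp
  have hsq := sq_sqrt hp.le
  have hin : HasDerivAt (fun t => 1 - m * sin (amplitude m t) ^ 2)
      (-(m * (2 * sin (amplitude m t) *
        (cos (amplitude m t) * √(1 - m * sin (amplitude m t) ^ 2))))) t := by
    simpa using ((hA.sin.fun_pow 2).const_mul m).const_sub 1
  refine (hA.cos.fun_mul (hin.sqrt hp.ne')).congr_deriv ?_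
  change _ = -(1 + m) * sin (amplitude m t) + 2 * m * sin (amplitude m t) ^ 3
  have hc := sin_sq_add_cos_sq (amplitude m t)
  set d := √(1 - m * sin (amplitude m t) ^ 2)
  set s := sin (amplitude m t)
  set c := cos (amplitude m t)
  have hc2 : c ^ 2 = 1 - s ^ 2 := by linarith
  have hfrac : -(m * (2 * s * (c * d))) / (2 * d) = -(m * s * c) := by
    field_simp
  rw [hfrac]
  linear_combination (-s) * hsq - m * s * hc2

lemma deriv_deriv_mul_sn {m : ℝ} (hm : m < 1) (V Ω t : ℝ) :
    deriv (deriv fun t => V * sn (Ω * t) m) t =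
      V * Ω ^ 2 * (-(1 + m) * sn (Ω * t) m + 2 * m * sn (Ω * t) m ^ 3) := by
  have hlin (t : ℝ) : HasDerivAt (fun t => Ω * t) Ω t := by
    simpa using (hasDerivAt_id t).const_mul Ω
  have h1 : (deriv fun t => V * sn (Ω * t) m) = fun t =>
      V * (cos (amplitude m (Ω * t)) * √(1 - m * sin (amplitude m (Ω * t)) ^ 2) * Ω) := by
    funext t
    exact (((hasDerivAt_sn hm (Ω * t)).comp t (hlin t)).const_mul V).deriv
  rw [h1]
  refine (((((hasDerivAt_deriv_sn hm (Ω * t)).comp t (hlin t)).mul_const Ω).const_mul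
    V).deriv).trans ?_
  ring

lemma sn_neg {m : ℝ} (hm : m < 1) (t : ℝ) : sn (-t) m = -sn t m := by
  obtain ⟨φ, rfl⟩ := surjective_Fm hm t
  rw [← Fm_neg, sn_Fm hm, sn_Fm hm, sin_neg]

lemma sn_periodic {m : ℝ} (hm : m < 1) :
    Function.Periodic (fun t => sn t m) (Fm m (2 * π)) := by
  intro t
  obtain ⟨φ, rfl⟩ := surjective_Fm hm t
  simp only [← Fm_add_two_pi hm, sn_Fm hm, sin_add_two_pi]

lemma Fm_two_pi_le_of_periodic {m : ℝ} (hm : m < 1) {p : ℝ} (hp : 0 < p)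
    (h : Function.Periodic (fun t => sn t m) p) : Fm m (2 * π) ≤ p := by
  by_contra! hlt
  obtain ⟨φ, hφ⟩ := surjective_Fm hm (Fm m (π / 2) + p)
  have hsin : sin φ = 1 := by
    have := h (Fm m (π / 2))
    simp only [← hφ, sn_Fm hm, sin_pi_div_two] at this
    exact this
  have hlow : π / 2 < φ := (strictMono_Fm hm).lt_iff_lt.1 (by linarith)
  have hupp : φ < π / 2 + 2 * π :=
    (strictMono_Fm hm).lt_iff_lt.1 (by rw [Fm_add_two_pi hm]; linarith)
  obtain ⟨k, hk⟩ := sin_eq_one_iff.1 hsin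
  have hk0 : (0 : ℝ) < k := by nlinarith [pi_pos]
  have hk1 : (k : ℝ) < 1 := by nlinarith [pi_pos]
  norm_cast at hk0 hk1
  omega

/-- The integral of `sn²` over one period, written in the amplitude variable. -/
noncomputable def snSqIntegral (m : ℝ) : ℝ :=
  ∫ θ in (0 : ℝ)..(2 * π), sin θ ^ 2 * (1 / √(1 - m * sin θ ^ 2))

lemma avg_mul_sn_sq {m : ℝ} (hm : m < 1) (V : ℝ) :
    avg (fun s => (V * sn (Fm m (2 * π) / (2 * π) * s) m) ^ 2) =
      V ^ 2 * snSqIntegral m / Fm m (2 * π) := by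
  have hD := Fm_two_pi_pos hm
  have hpi := two_pi_pos
  set D := Fm m (2 * π) with hDdef
  set Ω := D / (2 * π) with hΩdef
  have hΩ : 0 < Ω := div_pos hD hpi
  have hsn : Continuous fun t => sn t m :=
    continuous_iff_continuousAt.2 fun t => (hasDerivAt_sn hm t).continuousAt
  have hg : Continuous fun s => (V * sn (Ω * s) m) ^ 2 :=
    ((hsn.comp (continuous_const.mul continuous_id)).const_mul V |>.pow 2)
  have h := intervalIntegral.integral_comp_mul_deriv (a := 0) (b := 2 * π)
    (f := fun θ => Fm m θ / Ω) (f' := fun θ => 1 / √(1 - m * sin θ ^ 2) / Ω)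
    (g := fun s => (V * sn (Ω * s) m) ^ 2)
    (fun θ _ => (hasDerivAt_Fm hm θ).div_const Ω)
    ((continuous_one_div_sqrt hm).div_const Ω).continuousOn hg
  have hend : D / Ω = 2 * π := by rw [hΩdef]; field_simp
  rw [Fm_zero, zero_div, ← hDdef, hend] at h
  rw [avg, ← h, snSqIntegral]
  have hfun : (fun θ => ((fun s => (V * sn (Ω * s) m) ^ 2) ∘ fun θ => Fm m θ / Ω) θ *
      (1 / √(1 - m * sin θ ^ 2) / Ω)) =
      fun θ => V ^ 2 / Ω * (sin θ ^ 2 * (1 / √(1 - m * sin θ ^ 2))) := by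
    funext θ
    simp only [Function.comp, mul_div_cancel₀ _ hΩ.ne', sn_Fm hm]
    ring
  rw [hfun, intervalIntegral.integral_const_mul, hΩdef]
  generalize (∫ θ in (0 : ℝ)..(2 * π), sin θ ^ 2 * (1 / √(1 - m * sin θ ^ 2))) = S
  field_simp

lemma mul_sn_properties {m : ℝ} (hm : m < 1) {V : ℝ} (hV : 0 < V) :
    let Ω := Fm m (2 * π) / (2 * π)
    (∀ t : ℝ, (fun t => V * sn (Ω * t) m) (-t) = -(fun t => V * sn (Ω * t) m) t) ∧
      Function.Periodic (fun t => V * sn (Ω * t) m) (2 * π) ∧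
      ∀ p : ℝ, 0 < p → Function.Periodic (fun t => V * sn (Ω * t) m) p → 2 * π ≤ p := by
  intro Ω
  have hpi := two_pi_pos
  have hΩ : 0 < Ω := div_pos (Fm_two_pi_pos hm) hpi
  have hΩD : Ω * (2 * π) = Fm m (2 * π) := div_mul_cancel₀ _ hpi.ne'
  refine ⟨fun t => ?_, fun t => ?_, fun p hp h => ?_⟩
  · simp only [mul_neg, sn_neg hm]
  · simp only [mul_add, hΩD]
    exact congrArg (V * ·) (sn_periodic hm (Ω * t))
  · refine le_of_mul_le_mul_left ?_ hΩ
    rw [hΩD]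
    refine Fm_two_pi_le_of_periodic hm (mul_pos hΩ hp) fun t => ?_
    have := mul_left_cancel₀ hV.ne' (h (t / Ω))
    simpa only [mul_add, mul_div_cancel₀ _ hΩ.ne'] using this

lemma log_le_of_le_add_sq {m a c : ℝ} (hm : m < 1) (ha : 0 < a) (hc : 0 < c) (b : ℝ)
    (h : ∀ θ ∈ Set.Icc (0 : ℝ) 1, 1 - m * sin (θ + b) ^ 2 ≤ (c * (a + θ)) ^ 2) :
    log (1 + 1 / a) ≤ c * Fm m (2 * π) := by
  have hcont : Continuous fun θ => 1 / √(1 - m * sin (θ + b) ^ 2) :=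
    (continuous_one_div_sqrt hm).comp (continuous_id.add continuous_const)
  have hnn (θ : ℝ) : 0 ≤ 1 / √(1 - m * sin (θ + b) ^ 2) := by positivity
  have hD : Fm m (2 * π) = ∫ θ in (0 : ℝ)..(2 * π), 1 / √(1 - m * sin (θ + b) ^ 2) := by
    have hper : Function.Periodic (fun θ => 1 / √(1 - m * sin θ ^ 2)) (2 * π) :=
      fun θ => by simp only [sin_add_two_pi]
    rw [intervalIntegral.integral_comp_add_right (fun θ => 1 / √(1 - m * sin θ ^ 2)),
      zero_add, add_comm (2 * π), Fm]
    simpa using hper.intervalIntegral_add_eq 0 b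
  have hle : (∫ θ in (0 : ℝ)..1, 1 / √(1 - m * sin (θ + b) ^ 2)) ≤ Fm m (2 * π) := by
    rw [hD]
    exact intervalIntegral.integral_mono_interval le_rfl zero_le_one
      (by linarith [pi_gt_three]) (Filter.Eventually.of_forall hnn)
      (hcont.intervalIntegrable _ _)
  have hlog : (∫ θ in (0 : ℝ)..1, (a + θ)⁻¹) = log (1 + 1 / a) := by
    rw [intervalIntegral.integral_comp_add_left (fun x => x⁻¹),
      integral_inv_of_pos (by linarith) (by linarith)]
    congr 1
    field_simp
    ring
  have hmono : (∫ θ in (0 : ℝ)..1, (a + θ)⁻¹) ≤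
      ∫ θ in (0 : ℝ)..1, c * (1 / √(1 - m * sin (θ + b) ^ 2)) := by
    refine intervalIntegral.integral_mono_on zero_le_one ?_
      ((hcont.const_mul c).intervalIntegrable _ _) fun θ hθ => ?_
    · refine ContinuousOn.intervalIntegrable (ContinuousOn.inv₀ (by fun_prop) fun θ hθ => ?_)
      rw [Set.uIcc_of_le zero_le_one] at hθ
      linarith [hθ.1]
    · have h0 : 0 < a + θ := by linarith [hθ.1]
      have hs := sqrt_pos.2 (one_sub_mul_sin_sq_pos hm (θ + b))
      have hsle : √(1 - m * sin (θ + b) ^ 2) ≤ c * (a + θ) :=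
        (sqrt_le_left (by positivity)).2 (h θ hθ)
      rw [mul_one_div, inv_eq_one_div, div_le_div_iff₀ h0 hs]
      linarith
  rw [intervalIntegral.integral_const_mul, hlog] at hmono
  exact hmono.trans (mul_le_mul_of_nonneg_left hle hc.le)

lemma continuous_sin_sq_mul {m : ℝ} (hm : m < 1) :
    Continuous fun θ => sin θ ^ 2 * (1 / √(1 - m * sin θ ^ 2)) :=
  (continuous_sin.pow 2).mul (continuous_one_div_sqrt hm)

lemma integral_le_two_pi {f : ℝ → ℝ} (hf : Continuous f) (h : ∀ θ, f θ ≤ 1) :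
    ∫ θ in (0 : ℝ)..(2 * π), f θ ≤ 2 * π := by
  have := intervalIntegral.integral_mono_on (μ := MeasureTheory.volume) two_pi_pos.le
    (hf.intervalIntegrable _ _) (continuous_const.intervalIntegrable _ _)
    (g := fun _ => (1 : ℝ)) fun θ _ => h θ
  simpa using this

lemma snSqIntegral_neg_le {μ : ℝ} (hμ : 0 < μ) : √μ * snSqIntegral (-μ) ≤ 2 * π := by
  have hm : -μ < 1 := by linarith
  rw [snSqIntegral, ← intervalIntegral.integral_const_mul]
  refine integral_le_two_pi ((continuous_sin_sq_mul hm).const_mul _) fun θ => ?_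
  have hs := sqrt_pos.2 (one_sub_mul_sin_sq_pos hm θ)
  have hle : √μ * sin θ ^ 2 ≤ √(1 - -μ * sin θ ^ 2) := by
    refine le_sqrt_of_sq_le ?_
    rw [mul_pow, sq_sqrt hμ.le]
    have h1 := sin_sq_le_one θ
    have h0 := sq_nonneg (sin θ)
    nlinarith [mul_nonneg hμ.le (mul_nonneg h0 (sub_nonneg.2 h1))]
  rw [← mul_assoc, mul_one_div]
  exact (div_le_one hs).2 hle

lemma Fm_two_pi_sub_snSqIntegral_le {m : ℝ} (hm : m < 1) :
    Fm m (2 * π) - snSqIntegral m ≤ 2 * π := by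
  rw [Fm, snSqIntegral, ← intervalIntegral.integral_sub
    ((continuous_one_div_sqrt hm).intervalIntegrable _ _)
    ((continuous_sin_sq_mul hm).intervalIntegrable _ _)]
  refine integral_le_two_pi ((continuous_one_div_sqrt hm).sub (continuous_sin_sq_mul hm))
    fun θ => ?_
  have hs := sqrt_pos.2 (one_sub_mul_sin_sq_pos hm θ)
  have hle : 1 - sin θ ^ 2 ≤ √(1 - m * sin θ ^ 2) := by
    refine le_sqrt_of_sq_le ?_
    nlinarith [sin_sq_le_one θ, sq_nonneg (sin θ)]
  rw [← one_sub_mul, mul_one_div]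
  exact (div_le_one hs).2 hle

lemma snSqIntegral_pos {m : ℝ} (hm : m < 1) : 0 < snSqIntegral m := by
  refine intervalIntegral.integral_pos two_pi_pos (continuous_sin_sq_mul hm).continuousOn
    (fun θ _ => by positivity) ⟨π / 2, ⟨by positivity, by linarith [pi_pos]⟩, ?_⟩
  have := sqrt_pos.2 (one_sub_mul_sin_sq_pos hm (π / 2))
  rw [sin_pi_div_two] at this ⊢
  positivity

/-- The difference of the two sides of the equation relating the modulus to `lam`. -/
noncomputable def modulusGap (lam m : ℝ) : ℝ :=
  lam * (1 + m) * Fm m (2 * π) - 2 * m * snSqIntegral m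

lemma continuousOn_modulusGap (lam : ℝ) {M : ℝ} (hM : M < 1) :
    ContinuousOn (modulusGap lam) (Set.Iic M) := by
  have hker : Continuous fun p : ℝ × ℝ => 1 / √(1 - min p.1 M * sin p.2 ^ 2) :=
    continuous_const.div (by fun_prop) fun p =>
      (sqrt_pos.2 (one_sub_mul_sin_sq_pos ((min_le_right _ _).trans_lt hM) _)).ne'
  have hF : Continuous fun m => Fm (min m M) (2 * π) :=
    intervalIntegral.continuous_parametric_intervalIntegral_of_continuous'
      (f := fun m θ => 1 / √(1 - min m M * sin θ ^ 2)) hker 0 (2 * π)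
  have hS : Continuous fun m => snSqIntegral (min m M) :=
    intervalIntegral.continuous_parametric_intervalIntegral_of_continuous'
      (f := fun m θ => sin θ ^ 2 * (1 / √(1 - min m M * sin θ ^ 2)))
      (((continuous_sin.comp continuous_snd).fun_pow 2).fun_mul hker) 0 (2 * π)
  have h : Continuous fun m => lam * (1 + m) * Fm (min m M) (2 * π) -
      2 * m * snSqIntegral (min m M) := by fun_prop
  refine h.continuousOn.congr fun m hm => ?_
  simp only [modulusGap, min_eq_left (Set.mem_Iic.1 hm)]

lemma exists_modulusGap_neg_of_pos {lam : ℝ} (hlam : 0 < lam) :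
    ∃ m < -1, modulusGap lam m < 0 := by
  have ht : Filter.Tendsto (fun x : ℝ => log (1 + x)) Filter.atTop Filter.atTop :=
    tendsto_log_atTop.comp (Filter.tendsto_atTop_add_const_left _ _ Filter.tendsto_id)
  obtain ⟨x, hx, hx2⟩ := ((ht.eventually_gt_atTop (8 * π / lam)).and
    (Filter.eventually_ge_atTop 2)).exists
  have hx0 : 0 < x := by linarith
  have hm : -(x ^ 2) < 1 := by nlinarith
  refine ⟨-(x ^ 2), by nlinarith, ?_⟩
  have hlog := log_le_of_le_add_sq (a := 1 / x) (c := x) hm (by positivity) hx0 0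
    fun θ hθ => by
      have h1 : x * (1 / x + θ) = 1 + x * θ := by field_simp
      have h2 : sin θ ^ 2 ≤ θ ^ 2 := by
        have := sin_le hθ.1
        have h3 : 0 ≤ sin θ := sin_nonneg_of_nonneg_of_le_pi hθ.1
          (by linarith [hθ.2, pi_gt_three])
        gcongr
      rw [h1, add_zero]
      nlinarith [mul_le_mul_of_nonneg_left h2 (sq_nonneg x), mul_nonneg hx0.le hθ.1]
  rw [one_div_one_div] at hlog
  have hS := snSqIntegral_neg_le (pow_pos hx0 2)
  rw [sqrt_sq hx0.le] at hS
  rw [div_lt_iff₀ hlam] at hx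
  have hD := Fm_two_pi_pos hm
  rw [modulusGap]
  set D := Fm (-x ^ 2) (2 * π)
  set S := snSqIntegral (-x ^ 2)
  have hSD : 4 * S < lam * D := by
    refine lt_of_mul_lt_mul_left ?_ hx0.le
    nlinarith
  have hx4 : 4 ≤ x ^ 2 := by nlinarith
  nlinarith [mul_pos hlam hD, mul_lt_mul_of_pos_left hSD (pow_pos hx0 2),
    mul_le_mul_of_nonneg_right hx4 (mul_pos hlam hD).le]

lemma exists_modulusGap_neg_of_lt_one {lam : ℝ} (hlam0 : 0 < lam) (hlam : lam < 1) :
    ∃ m ∈ Set.Ioo (0 : ℝ) 1, modulusGap lam m < 0 := by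
  have ht : Filter.Tendsto (fun x : ℝ => log (1 + x)) Filter.atTop Filter.atTop :=
    tendsto_log_atTop.comp (Filter.tendsto_atTop_add_const_left _ _ Filter.tendsto_id)
  have hl : 0 < 1 - lam := sub_pos.2 hlam
  obtain ⟨x, hx, hx2, hxl⟩ := ((ht.eventually_gt_atTop (4 * π / (1 - lam))).and
    ((Filter.eventually_ge_atTop 2).and (Filter.eventually_ge_atTop (2 / (1 - lam))))).exists
  have hx0 : 0 < x := by linarith
  obtain ⟨ε, hε⟩ : ∃ ε, ε = 1 / x := ⟨_, rfl⟩
  have hε0 : 0 < ε := by rw [hε]; positivity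
  have hεx : ε * x = 1 := by rw [hε]; field_simp
  have hε1 : ε ≤ 1 / 2 := by nlinarith
  have hεl : 2 * ε ≤ 1 - lam := by
    rw [div_le_iff₀ hl] at hxl
    nlinarith [mul_le_mul_of_nonneg_left hxl hε0.le]
  have hm : 1 - ε ^ 2 < 1 := by nlinarith
  have hm0 : 0 < 1 - ε ^ 2 := by nlinarith
  refine ⟨1 - ε ^ 2, ⟨hm0, hm⟩, ?_⟩
  have hlog := log_le_of_le_add_sq (a := ε) (c := 1) hm hε0 one_pos (π / 2)
    fun θ hθ => by
      have h2 : sin θ ^ 2 ≤ θ ^ 2 := by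
        have := sin_le hθ.1
        have h3 : 0 ≤ sin θ := sin_nonneg_of_nonneg_of_le_pi hθ.1
          (by linarith [hθ.2, pi_gt_three])
        gcongr
      rw [sin_add_pi_div_two]
      nlinarith [sin_sq_add_cos_sq θ, mul_nonneg (sq_nonneg ε) (sq_nonneg (sin θ)),
        mul_nonneg hε0.le hθ.1]
  have hxe : 1 / ε = x := by rw [hε, one_div_one_div]
  rw [hxe, one_mul] at hlog
  have hS := Fm_two_pi_sub_snSqIntegral_le hm
  rw [div_lt_iff₀ hl] at hx
  have hD := Fm_two_pi_pos hm
  rw [modulusGap]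
  set D := Fm (1 - ε ^ 2) (2 * π)
  set S := snSqIntegral (1 - ε ^ 2)
  have hcoef : lam * (1 + (1 - ε ^ 2)) - 2 * (1 - ε ^ 2) ≤ -(1 - lam) := by nlinarith
  have hDl : 4 * π < D * (1 - lam) := by nlinarith
  have h1 := mul_le_mul_of_nonneg_right hcoef hD.le
  have h2 := mul_le_mul_of_nonneg_left hS hm0.le
  nlinarith [pi_pos, mul_pos (pow_pos hε0 2) pi_pos]

lemma exists_modulusGap_eq_zero_lt_neg_one {lam : ℝ} (hlam : 0 < lam) :
    ∃ m < -1, modulusGap lam m = 0 := by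
  obtain ⟨a, ha, hneg⟩ := exists_modulusGap_neg_of_pos hlam
  have hpos : 0 < modulusGap lam (-1) := by
    have := snSqIntegral_pos (m := -1) (by norm_num)
    rw [modulusGap]
    linarith
  obtain ⟨m, hm, h⟩ := intermediate_value_Ioo ha.le
    ((continuousOn_modulusGap lam (M := -1) (by norm_num)).mono Set.Icc_subset_Iic_self)
    ⟨hneg, hpos⟩
  exact ⟨m, hm.2, h⟩

lemma exists_modulusGap_eq_zero_mem_Ioo {lam : ℝ} (hlam : lam ∈ Set.Ioo (0 : ℝ) 1) :
    ∃ m ∈ Set.Ioo (0 : ℝ) 1, modulusGap lam m = 0 := by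
  obtain ⟨b, hb, hneg⟩ := exists_modulusGap_neg_of_lt_one hlam.1 hlam.2
  have hpos : 0 < modulusGap lam 0 := by
    have := mul_pos hlam.1 (Fm_two_pi_pos (m := 0) one_pos)
    rw [modulusGap]
    linarith
  obtain ⟨m, hm, h⟩ := intermediate_value_Ioo' hb.1.le
    ((continuousOn_modulusGap lam hb.2).mono Set.Icc_subset_Iic_self) ⟨hneg, hpos⟩
  exact ⟨m, ⟨hm.1, hm.2.trans hb.2⟩, h⟩

/-- Coefficient comparison: with `V² = 2qΩ²/lam` and `q = ±m`, the equation for `sn` becomes the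
nonlocal equation for `V * sn (Ω * t)`. -/
lemma mul_sn_equation {lam m q V Ω D S y : ℝ} (hlam : lam ≠ 0) (hD : D ≠ 0)
    (hgap : lam * (1 + m) * D - 2 * m * S = 0) (hV : V ^ 2 = 2 * q * Ω ^ 2 / lam)
    {σ : ℝ} (hσ : σ ^ 2 = 1) (hq : q = σ * m) :
    V * Ω ^ 2 * (-(1 + m) * y + 2 * m * y ^ 3) + σ * (V ^ 2 * S / D * (V * y)
      - lam * (V * y) ^ 3) = 0 := by
  have hV' : lam * V ^ 2 = 2 * q * Ω ^ 2 := by rw [hV]; field_simp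
  have hS : V ^ 2 * S / D = σ * Ω ^ 2 * (1 + m) := by
    rw [div_eq_iff hD]
    refine mul_left_cancel₀ hlam ?_
    subst hq
    linear_combination S * hV' - σ * Ω ^ 2 * hgap
  rw [hS]
  subst hq
  linear_combination (V * y * Ω ^ 2 * (1 + m) - 2 * m * Ω ^ 2 * V * y ^ 3) * hσ
    - σ * V * y ^ 3 * hV'

theorem stmt_13 :
    -- (i)  case s* = −1
    (∀ lam : ℝ, 0 < lam →
      ∃ V Ω m : ℝ, 0 < V ∧ 0 < Ω ∧ m < -1 ∧
        (∀ t : ℝ, (fun t => V * sn (Ω * t) m) (-t) = -(fun t => V * sn (Ω * t) m) t) ∧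
        Function.Periodic (fun t => V * sn (Ω * t) m) (2 * π) ∧
        (∀ p : ℝ, 0 < p → Function.Periodic (fun t => V * sn (Ω * t) m) p → 2 * π ≤ p) ∧
        (∀ t : ℝ, deriv (deriv (fun t => V * sn (Ω * t) m)) t
            - avg (fun s => (V * sn (Ω * s) m) ^ 2) * (V * sn (Ω * t) m)
            + lam * (V * sn (Ω * t) m) ^ 3 = 0)) ∧
    -- (ii)  case s* = 1
    (∀ lam : ℝ, lam ∈ Set.Ioo (0 : ℝ) 1 →
      ∃ V Ω m : ℝ, 0 < V ∧ 0 < Ω ∧ m ∈ Set.Ioo (0 : ℝ) 1 ∧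
        (∀ t : ℝ, (fun t => V * sn (Ω * t) m) (-t) = -(fun t => V * sn (Ω * t) m) t) ∧
        Function.Periodic (fun t => V * sn (Ω * t) m) (2 * π) ∧
        (∀ p : ℝ, 0 < p → Function.Periodic (fun t => V * sn (Ω * t) m) p → 2 * π ≤ p) ∧
        (∀ t : ℝ, deriv (deriv (fun t => V * sn (Ω * t) m)) t
            + avg (fun s => (V * sn (Ω * s) m) ^ 2) * (V * sn (Ω * t) m)
            - lam * (V * sn (Ω * t) m) ^ 3 = 0)) := by
  refine ⟨fun lam hlam => ?_, fun lam hlam => ?_⟩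
  · obtain ⟨m, hm, hgap⟩ := exists_modulusGap_eq_zero_lt_neg_one hlam
    have hm1 : m < 1 := by linarith
    have hD := Fm_two_pi_pos hm1
    have hΩ := div_pos hD two_pi_pos
    have hq : 0 < 2 * (-m) * (Fm m (2 * π) / (2 * π)) ^ 2 / lam :=
      div_pos (mul_pos (by linarith) (pow_pos hΩ 2)) hlam
    obtain ⟨hodd, hper, hmin⟩ := mul_sn_properties hm1 (sqrt_pos.2 hq)
    refine ⟨_, _, m, sqrt_pos.2 hq, hΩ, hm, hodd, hper, hmin, fun t => ?_⟩
    rw [deriv_deriv_mul_sn hm1, avg_mul_sn_sq hm1]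
    linear_combination mul_sn_equation (y := sn (Fm m (2 * π) / (2 * π) * t) m)
      hlam.ne' hD.ne' hgap (sq_sqrt hq.le) (σ := -1) (by norm_num) (by ring)
  · obtain ⟨m, hm, hgap⟩ := exists_modulusGap_eq_zero_mem_Ioo hlam
    have hm1 : m < 1 := hm.2
    have hD := Fm_two_pi_pos hm1
    have hΩ := div_pos hD two_pi_pos
    have hq : 0 < 2 * m * (Fm m (2 * π) / (2 * π)) ^ 2 / lam :=
      div_pos (mul_pos (by linarith [hm.1]) (pow_pos hΩ 2)) hlam.1
    obtain ⟨hodd, hper, hmin⟩ := mul_sn_properties hm1 (sqrt_pos.2 hq)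
    refine ⟨_, _, m, sqrt_pos.2 hq, hΩ, hm, hodd, hper, hmin, fun t => ?_⟩
    rw [deriv_deriv_mul_sn hm1, avg_mul_sn_sq hm1]
    linear_combination mul_sn_equation (y := sn (Fm m (2 * π) / (2 * π) * t) m)
      hlam.1.ne' hD.ne' hgap (sq_sqrt hq.le) (σ := 1) (by norm_num) (by ring)
end

section
/- For every R > 0 one has ∫₀^{π/2} ( (R − 1)/((R + 1)R) − sin²θ ) · (1 + R² sin²θ)^{−1/2} dθ < 0. -/
open Real

/-- The function `s ↦ (c - s) / √(1 + R² s)` is convex when `1 + R² c ≥ 0`, hence lies below its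
chord on `[0, 1]`. -/
lemma sub_div_sqrt_le_chord {R c s : ℝ} (hR : 0 < R) (hc : 0 ≤ 1 + R ^ 2 * c)
    (hs0 : 0 ≤ s) (hs1 : s ≤ 1) :
    (c - s) / √(1 + R ^ 2 * s) ≤ c * (1 - s) - s * ((1 - c) / √(1 + R ^ 2)) := by
  have hR2 : 0 < R ^ 2 := by positivity
  have hq2 : √(1 + R ^ 2 * s) ^ 2 = 1 + R ^ 2 * s := sq_sqrt (by positivity)
  have hD2 : √(1 + R ^ 2) ^ 2 = 1 + R ^ 2 := sq_sqrt (by positivity)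
  have hq1 : 1 ≤ √(1 + R ^ 2 * s) := one_le_sqrt.2 (by nlinarith)
  have hqD : √(1 + R ^ 2 * s) ≤ √(1 + R ^ 2) := sqrt_le_sqrt (by nlinarith)
  have hD1 : 1 < √(1 + R ^ 2) := lt_sqrt_of_sq_lt (by linarith)
  generalize √(1 + R ^ 2 * s) = q at *
  generalize √(1 + R ^ 2) = D at *
  have hq0 : 0 < q := by linarith
  have hD0 : 0 < D := by linarith
  have hsD : s * (D - 1) * (D + 1) = (q - 1) * (q + 1) := by linear_combination s * hD2 - hq2
  have hle : s * (D - 1) ≤ q - 1 := by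
    refine le_of_mul_le_mul_right ?_ (by linarith : 0 < D + 1)
    rw [hsD]
    gcongr
  have hinv : 1 / q ≤ 1 - s + s / D := by
    have h : s * (D - 1) * q ≤ (q - 1) * D := by
      refine le_of_mul_le_mul_right ?_ (by linarith : 0 < D + 1)
      calc s * (D - 1) * q * (D + 1) = (q - 1) * (q * (q + 1)) := by linear_combination q * hsD
        _ ≤ (q - 1) * (D * (D + 1)) := by gcongr
        _ = (q - 1) * D * (D + 1) := by ring
    rw [div_le_iff₀ hq0, ← sub_nonneg]
    have : (1 - s + s / D) * q - 1 = ((q - 1) * D - s * (D - 1) * q) / D := by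
      field_simp
      ring
    rw [this]
    exact div_nonneg (by linarith) hD0.le
  have hmul := mul_le_mul_of_nonneg_left hinv hc
  refine le_of_mul_le_mul_left ?_ hR2
  have hl : R ^ 2 * ((c - s) / q) = (1 + R ^ 2 * c) * (1 / q) - q := by
    field_simp
    linear_combination hq2
  have hr : R ^ 2 * (c * (1 - s) - s * ((1 - c) / D))
      = (1 + R ^ 2 * c) * (1 - s + s / D) - (1 + s * (D - 1)) := by
    field_simp
    linear_combination s * hD2
  rw [hl, hr]
  linarith

theorem stmt_18 (R : ℝ) (hR : 0 < R) :
    ∫ θ in (0:ℝ)..(π / 2),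
        ((R - 1) / ((R + 1) * R) - Real.sin θ ^ 2) / Real.sqrt (1 + R ^ 2 * Real.sin θ ^ 2)
      < 0 := by
  have hcR : (R - 1) / ((R + 1) * R) * ((R + 1) * R) = R - 1 := by field_simp
  generalize (R - 1) / ((R + 1) * R) = c at *
  have hc : 0 ≤ 1 + R ^ 2 * c := by
    have : (1 + R ^ 2 * c) * (R + 1) = R ^ 2 + 1 := by linear_combination R * hcR
    nlinarith
  have hD1 : 0 < √(1 + R ^ 2) := by positivity
  have hDR : √(1 + R ^ 2) < R + 1 := (sqrt_lt' (by linarith)).2 (by nlinarith)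
  have hneg : c - (1 - c) / √(1 + R ^ 2) < 0 := by
    rw [sub_neg, lt_div_iff₀ hD1]
    have hR1 : 0 < (R + 1) * R := by positivity
    refine lt_of_mul_lt_mul_right ?_ hR1.le
    have h1 : c * √(1 + R ^ 2) * ((R + 1) * R) = (R - 1) * √(1 + R ^ 2) := by
      linear_combination √(1 + R ^ 2) * hcR
    have h2 : (1 - c) * ((R + 1) * R) = R ^ 2 + 1 := by linear_combination -hcR
    rw [h1, h2]
    nlinarith
  calc _ ≤ ∫ θ in (0:ℝ)..(π / 2),
        (c - (c + (1 - c) / √(1 + R ^ 2)) * Real.sin θ ^ 2) := by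
        refine intervalIntegral.integral_mono (by positivity) ?_ ?_ fun θ => ?_
        · refine Continuous.intervalIntegrable ?_ _ _
          refine Continuous.div (by fun_prop) (by fun_prop) fun θ => ?_
          positivity
        · exact Continuous.intervalIntegrable (by fun_prop) _ _
        · have := sub_div_sqrt_le_chord hR hc (sq_nonneg (Real.sin θ)) (sin_sq_le_one θ)
          refine this.trans_eq ?_
          ring
    _ = π / 4 * (c - (1 - c) / √(1 + R ^ 2)) := by
        rw [intervalIntegral.integral_sub (Continuous.intervalIntegrable (by fun_prop) _ _)
          (Continuous.intervalIntegrable (by fun_prop) _ _),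
          intervalIntegral.integral_const_mul, integral_sin_sq]
        simp
        ring
    _ < 0 := mul_neg_of_pos_of_neg (by positivity) hneg
end

section
/- Let η : ℝ → ℝ be a continuous, odd, 2π-periodic function, and define v(t, x) := η(t + x) − η(t − x). Then ∫₀^{2π} ∫₀^{π} v(t, x)⁴ dx dt = 2π ∫₀^{2π} η(s)⁴ ds + 3 ( ∫₀^{2π} η(s)² ds )². -/
open Real

open MeasureTheory intervalIntegral in
theorem intervalIntegral_swap_of_continuous {F : ℝ → ℝ → ℝ} (hF : Continuous F.uncurry)
    (a b c d : ℝ) :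
    ∫ x in a..b, ∫ y in c..d, F x y = ∫ y in c..d, ∫ x in a..b, F x y := by
  apply intervalIntegral_intervalIntegral_swap
  have hcompact : IsCompact (Set.uIcc a b ×ˢ Set.uIcc c d) := isCompact_uIcc.prod isCompact_uIcc
  exact (hF.continuousOn.integrableOn_compact hcompact).mono_set
    (Set.prod_mono Set.uIoc_subset_uIcc Set.uIoc_subset_uIcc)

/-- Over a full period in both variables, the characteristic coordinates `t + x` and `t - x`
separate. -/
theorem Function.Periodic.integral_integral_mul_add_sub {f g : ℝ → ℝ} {T : ℝ}
    (hf : Continuous f) (hg : Continuous g)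
    (hfp : Function.Periodic f T) (hgp : Function.Periodic g T) :
    ∫ t in (0:ℝ)..T, ∫ x in (0:ℝ)..T, f (t + x) * g (t - x)
      = (∫ s in (0:ℝ)..T, f s) * ∫ s in (0:ℝ)..T, g s := by
  have shift (x : ℝ) : ∫ t in (0:ℝ)..T, f (t + x) * g (t - x)
      = ∫ t in (0:ℝ)..T, f (t + 2 * x) * g t := by
    have hper : Function.Periodic (fun t => f (t + 2 * x) * g t) T := fun t => by
      simp only [hgp t, show t + T + 2 * x = t + 2 * x + T by ring, hfp (t + 2 * x)]
    have h := intervalIntegral.integral_comp_sub_right (a := 0) (b := T)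
      (fun t => f (t + 2 * x) * g t) x
    have h' := hper.intervalIntegral_add_eq (0 - x) 0
    rw [show 0 - x + T = T - x by ring, zero_add] at h'
    rw [← h', ← h]
    congr 1 with t
    ring_nf
  have mean (t : ℝ) : ∫ x in (0:ℝ)..T, f (t + 2 * x) = ∫ s in (0:ℝ)..T, f s := by
    have h := hfp.intervalIntegral_add_zsmul_eq 2 t (fun _ _ => hf.intervalIntegrable _ _)
    rw [hfp.intervalIntegral_add_eq t 0, zero_add] at h
    rw [intervalIntegral.integral_comp_add_mul _ two_ne_zero]
    simp only [zsmul_eq_mul, Int.cast_ofNat] at h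
    simp [h]
  rw [intervalIntegral_swap_of_continuous (by fun_prop)]
  simp_rw [shift]
  rw [intervalIntegral_swap_of_continuous (by fun_prop)]
  simp_rw [intervalIntegral.integral_mul_const, mean, intervalIntegral.integral_const_mul]

theorem Function.Periodic.integral_eq_zero_of_odd {f : ℝ → ℝ} {T : ℝ}
    (hfp : Function.Periodic f T) (hodd : ∀ t, f (-t) = -f t) :
    ∫ s in (0:ℝ)..T, f s = 0 := by
  have h := intervalIntegral.integral_comp_sub_left (a := 0) (b := T) f T
  simp only [sub_self, sub_zero, hfp.sub_eq', hodd, intervalIntegral.integral_neg] at h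
  linarith

theorem Function.Periodic.integral_eq_two_mul_of_even {f : ℝ → ℝ} {T : ℝ} (hf : Continuous f)
    (hfp : Function.Periodic f (2 * T)) (heven : ∀ t, f (-t) = f t) :
    ∫ s in (0:ℝ)..(2 * T), f s = 2 * ∫ s in (0:ℝ)..T, f s := by
  have h := intervalIntegral.integral_comp_sub_left (a := 0) (b := T) f (2 * T)
  simp only [sub_zero, hfp.sub_eq', heven, show 2 * T - T = T by ring] at h
  rw [← intervalIntegral.integral_add_adjacent_intervals (hf.intervalIntegrable 0 T)
    (hf.intervalIntegrable T (2 * T)), ← h]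
  ring

theorem stmt_19 (η : ℝ → ℝ) (hcont : Continuous η) (hodd : ∀ t : ℝ, η (-t) = -η t)
    (hper : Function.Periodic η (2 * π)) :
    ∫ t in (0:ℝ)..(2 * π), ∫ x in (0:ℝ)..π, (η (t + x) - η (t - x)) ^ 4
      = 2 * π * (∫ s in (0:ℝ)..(2 * π), η s ^ 4)
        + 3 * (∫ s in (0:ℝ)..(2 * π), η s ^ 2) ^ 2 := by
  have half (t : ℝ) : ∫ x in (0:ℝ)..π, (η (t + x) - η (t - x)) ^ 4
      = 2⁻¹ * ∫ x in (0:ℝ)..(2 * π), (η (t + x) - η (t - x)) ^ 4 := by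
    rw [Function.Periodic.integral_eq_two_mul_of_even (by fun_prop)]
    · ring
    · intro x
      simp only [← add_assoc, hper (t + x), ← sub_sub, hper.sub_eq (t - x)]
    · intro x
      simp only [sub_neg_eq_add, ← sub_eq_add_neg]
      ring
  have expand : ∫ t in (0:ℝ)..(2 * π), ∫ x in (0:ℝ)..(2 * π), (η (t + x) - η (t - x)) ^ 4
      = ∑ m ∈ Finset.range 5, (∫ s in (0:ℝ)..(2 * π), η s ^ m)
          * (∫ s in (0:ℝ)..(2 * π), (-η s) ^ (4 - m)) * (Nat.choose 4 m : ℝ) := by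
    simp_rw [sub_eq_add_neg (η _), add_pow]
    have inner (t : ℝ) := intervalIntegral.integral_finsetSum (μ := MeasureTheory.volume)
      (a := 0) (b := 2 * π) (s := Finset.range 5)
      (f := fun m x => η (t + x) ^ m * (-η (t - x)) ^ (4 - m) * (Nat.choose 4 m : ℝ))
      (fun m _ => Continuous.intervalIntegrable (by fun_prop) _ _)
    simp_rw [inner]
    rw [intervalIntegral.integral_finsetSum
      (fun m _ => Continuous.intervalIntegrable (by fun_prop) _ _)]
    refine Finset.sum_congr rfl fun m _ => ?_
    simp_rw [intervalIntegral.integral_mul_const]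
    rw [Function.Periodic.integral_integral_mul_add_sub (f := fun s => η s ^ m)
      (g := fun s => (-η s) ^ (4 - m)) (by fun_prop) (by fun_prop)
      (fun s => by simp only [hper s]) (fun s => by simp only [hper s])]
  simp_rw [half, intervalIntegral.integral_const_mul, expand]
  have hmean := hper.integral_eq_zero_of_odd hodd
  norm_num [Finset.sum_range_succ, Nat.choose, hmean, Even.neg_pow]
  ring
end
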